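/- The plain switch distribution is strongly universal: for every stationary ergodic probability measure Q on Ω = {1,...,D}^ℤ, Q-almost surely limsup_{n→∞} (1/n)·(−log P(X_1^n)) ≤ h_Q. -/

import Mathlib

open Filter MeasureTheory
open scoped Topology

/-- Number of occurrences `c(w|z)` of `w` as a substring of `z`. -/
def cnt {D : ℕ} (w z : List (Fin D)) : ℕ :=
  ((List.range (z.length - w.length + 1)).filter
    (fun i => (z.drop i).take w.length = w)).length

/-- Count `c(w | z_1^{m-1})` of `w` in the string `z` with its last symbol removed,
with the convention that counting in a block of length `-1` (i.e. when `z` itself is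
empty) gives `0`. -/
def cntPred {D : ℕ} (w z : List (Fin D)) : ℕ :=
  if z = [] then 0 else cnt w z.dropLast

/-- The prefix `x_1^n` of the one-sided sequence `x` (0-indexed: `x i = x_{i+1}`). -/
def pref {D : ℕ} (x : ℕ → Fin D) (n : ℕ) : List (Fin D) :=
  (List.range n).map x

/-- Adaptive Markov predictor: the natural-number index corresponds to the Markov
order shifted by one, so `Bpred D xs a (k+1) = B(a | xs, k)` and
`Bpred D xs a 0 = B(a | xs, -1) = 1/D`, where
`B(x_{n+1}|x_1^n, k) = (c(x_{n+1-k}^{n+1}|x_1^n) + B(x_{n+1}|x_1^n, k-1)) /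
(c(x_{n+1-k}^{n}|x_1^{n-1}) + 1)`.  Counts of substrings whose indices fall outside
the string are taken to be zero. -/
noncomputable def Bpred (D : ℕ) (xs : List (Fin D)) (a : Fin D) : ℕ → ℝ
  | 0 => 1 / D
  | k + 1 =>
    if k ≤ xs.length then
      ((cnt (xs.drop (xs.length - k) ++ [a]) xs : ℝ) + Bpred D xs a k) /
      ((cntPred (xs.drop (xs.length - k)) xs : ℝ) + 1)
    else Bpred D xs a k

/-- Partial switch distribution `P(x_1^n, k)` with Markov order `k : ℤ`:
`P(x_1,-1) = p_0 B(x_1|-1)`, `P(x_1,0) = (1-p_0) B(x_1|0)`, `P(x_1^n,k) = 0`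
for `k < -1` or `k ≥ n`, and
`P(x_1^{n+1},k) = [p_n P(x_1^n,k) + (1-p_n) P(x_1^n,k-1)] B(x_{n+1}|x_1^n,k)`. -/
noncomputable def Ppart (D : ℕ) (p : ℕ → ℝ) (x : ℕ → Fin D) : ℕ → ℤ → ℝ
  | 0, _ => 0
  | 1, k =>
    if k = -1 then p 0 * Bpred D [] (x 0) 0
    else if k = 0 then (1 - p 0) * Bpred D [] (x 0) 1
    else 0
  | n + 2, k =>
    if -1 ≤ k ∧ k ≤ (n : ℤ) + 1 then
      (p (n + 1) * Ppart D p x (n + 1) k +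
        (1 - p (n + 1)) * Ppart D p x (n + 1) (k - 1)) *
        Bpred D (pref x (n + 1)) (x (n + 1)) (k + 1).toNat
    else 0

/-- The plain switch distribution `P(x_1^n) = Σ_{k=-1}^{n-1} P(x_1^n, k)`. -/
noncomputable def swP (D : ℕ) (p : ℕ → ℝ) (x : ℕ → Fin D) (n : ℕ) : ℝ :=
  ∑ kk ∈ Finset.range (n + 1), Ppart D p x n ((kk : ℤ) - 1)

/-- The two-sided sequence space `Ω = {1,...,D}^ℤ` with the product σ-algebra. -/
abbrev Omega (D : ℕ) := ℤ → Fin D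

/-- The shift `T : Ω → Ω`. -/
def shiftT (D : ℕ) : Omega D → Omega D := fun ω i => ω (i + 1)

/-- The cylinder set `{X_1 = x 0, ..., X_n = x (n-1)}`. -/
def cylSet (D : ℕ) (x : ℕ → Fin D) (n : ℕ) : Set (Omega D) :=
  {ω | ∀ i < n, ω ((i : ℤ) + 1) = x i}

/-- The one-sided sample path `X_1, X_2, ...` of `ω` (0-indexed). -/
def path (D : ℕ) (ω : Omega D) : ℕ → Fin D := fun i => ω ((i : ℤ) + 1)

/-- The cylinder probability `Q(x_1^n)`. -/
noncomputable def Qstr (D : ℕ) (Q : Measure (Omega D)) (x : ℕ → Fin D) (n : ℕ) : ℝ :=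
  (Q (cylSet D x n)).toReal

noncomputable def maxSum {Ω : Type*} (T : Ω → Ω) (f : Ω → ℝ) : ℕ → Ω → ℝ
  | 0, _ => 0
  | n + 1, ω => max 0 (f ω + maxSum T f n (T ω))

lemma maxSum_nonneg {Ω : Type*} (T : Ω → Ω) (f : Ω → ℝ) (n : ℕ) (ω : Ω) :
    0 ≤ maxSum T f n ω := by
  cases n <;> simp [maxSum]

lemma maxSum_succ_le {Ω : Type*} (T : Ω → Ω) (f : Ω → ℝ) (n : ℕ) :
    ∀ ω, maxSum T f n ω ≤ maxSum T f (n + 1) ω := by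
  induction n with
  | zero => intro ω; exact maxSum_nonneg _ _ _ _
  | succ n ih =>
    intro ω
    rw [maxSum, maxSum]
    have := ih (T ω)
    gcongr

lemma maxSum_mono {Ω : Type*} (T : Ω → Ω) (f : Ω → ℝ) (ω : Ω) :
    Monotone (fun n => maxSum T f n ω) :=
  monotone_nat_of_le_succ (fun n => maxSum_succ_le T f n ω)

lemma birkhoff_le_maxSum {Ω : Type*} (T : Ω → Ω) (f : Ω → ℝ) (n : ℕ) :
    ∀ ω, birkhoffSum T f n ω ≤ maxSum T f n ω := by
  induction n with
  | zero => intro ω; simp [maxSum]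
  | succ n ih =>
    intro ω
    rw [birkhoffSum_succ', maxSum]
    exact le_trans (by linarith [ih (T ω)]) (le_max_right _ _)

lemma maxSum_meas {Ω : Type*} [MeasurableSpace Ω] {T : Ω → Ω} {f : Ω → ℝ}
    (hT : Measurable T) (hf : Measurable f) (n : ℕ) : Measurable (maxSum T f n) := by
  induction n with
  | zero => exact measurable_const
  | succ n ih => exact measurable_const.max (hf.add (ih.comp hT))

lemma maxSum_integrable {Ω : Type*} [MeasurableSpace Ω] {μ : Measure Ω} [IsProbabilityMeasure μ]
    {T : Ω → Ω} {f : Ω → ℝ} (hT : MeasurePreserving T μ μ) (hfi : Integrable f μ) (n : ℕ) :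
    Integrable (maxSum T f n) μ := by
  induction n with
  | zero => exact integrable_const 0
  | succ n ih =>
    exact (integrable_const (0:ℝ)).sup (hfi.add (hT.integrable_comp_of_integrable ih))

lemma ergodic_bdd {Ω : Type*} [MeasurableSpace Ω] {μ : Measure Ω} [IsProbabilityMeasure μ]
    {T : Ω → Ω} (hT : Ergodic T μ) {f : Ω → ℝ} (hf : Measurable f) (hfi : Integrable f μ)
    (hneg : ∫ ω, f ω ∂μ < 0) :
    ∀ᵐ ω ∂μ, ∃ C : ℝ, ∀ n, birkhoffSum T f n ω ≤ C := by
  have hmp := hT.toMeasurePreserving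
  set A : Set Ω := {ω | ∀ C : ℕ, ∃ n, (C : ℝ) < maxSum T f n ω} with hA
  have hAm : MeasurableSet A := by
    have : A = ⋂ C : ℕ, ⋃ n, {ω | (C : ℝ) < maxSum T f n ω} := by
      ext; simp [hA]
    rw [this]
    exact MeasurableSet.iInter fun C => MeasurableSet.iUnion fun n =>
      measurableSet_lt measurable_const (maxSum_meas hmp.measurable hf n)
  have hinv : T ⁻¹' A = A := by
    ext ω
    simp only [hA, Set.mem_preimage, Set.mem_ofPred_eq]
    constructor
    · intro h C
      obtain ⟨C', hC'⟩ := exists_nat_gt ((C : ℝ) - f ω)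
      obtain ⟨n, hn⟩ := h C'
      refine ⟨n + 1, ?_⟩
      rw [maxSum]
      exact lt_of_lt_of_le (by linarith) (le_max_right _ _)
    · intro h C
      obtain ⟨C', hC'⟩ := exists_nat_gt (max 0 ((C : ℝ) + f ω))
      obtain ⟨n, hn⟩ := h C'
      have h1 := hn.trans_le (maxSum_succ_le T f n ω)
      rw [maxSum] at h1
      refine ⟨n, ?_⟩
      have h2 := hC'.trans h1
      by_contra! h3
      exact absurd h2 (not_lt.mpr (max_le_max le_rfl (by linarith)))
  have hcases : μ A = 0 ∨ μ A = 1 := hT.toPreErgodic.prob_eq_zero_or_one hAm hinv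
  rcases hcases with h0 | h1
  · have : ∀ᵐ ω ∂μ, ω ∉ A := measure_eq_zero_iff_ae_notMem.mp h0
    filter_upwards [this] with ω hω
    simp only [hA, Set.mem_ofPred_eq, not_forall, not_exists, not_lt] at hω
    obtain ⟨C, hC⟩ := hω
    exact ⟨C, fun n => (birkhoff_le_maxSum T f n ω).trans (hC n)⟩
  · exfalso
    have hae : ∀ᵐ ω ∂μ, ω ∈ A := by
      rw [← prob_compl_eq_zero_iff hAm] at h1
      have := measure_eq_zero_iff_ae_notMem.mp h1
      simpa using this
    have hlim : Tendsto (fun n => ∫ ω, (maxSum T f (n+1) ω - maxSum T f n (T ω)) ∂μ) atTop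
        (𝓝 (∫ ω, f ω ∂μ)) := by
      refine tendsto_integral_of_dominated_convergence (fun ω => |f ω|) ?_ hfi.abs ?_ ?_
      · intro n
        exact ((maxSum_meas hmp.measurable hf _).sub
          ((maxSum_meas hmp.measurable hf n).comp hmp.measurable)).aestronglyMeasurable
      · intro n
        refine Eventually.of_forall fun ω => ?_
        have h0 := maxSum_nonneg T f n (T ω)
        rw [Real.norm_eq_abs, maxSum, abs_le]
        have ha := neg_abs_le (f ω)
        have hb := le_abs_self (f ω)
        constructor
        · linarith [le_max_right 0 (f ω + maxSum T f n (T ω))]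
        · have : max 0 (f ω + maxSum T f n (T ω)) ≤ |f ω| + maxSum T f n (T ω) :=
            max_le (by positivity) (by linarith)
          linarith
      · filter_upwards [hae] with ω hω
        rw [← hinv] at hω
        obtain ⟨C, hC⟩ := exists_nat_gt (- f ω)
        obtain ⟨N, hN⟩ := hω C
        refine tendsto_const_nhds.congr' ?_
        filter_upwards [eventually_ge_atTop N] with n hn
        have := maxSum_mono T f (T ω) hn
        simp only at this
        rw [maxSum, max_eq_right (by linarith)]
        ring
    have hge : ∀ n, 0 ≤ ∫ ω, (maxSum T f (n+1) ω - maxSum T f n (T ω)) ∂μ := by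
      intro n
      have hi := maxSum_integrable hmp hfi
      have hi2 : Integrable (fun ω => maxSum T f n (T ω)) μ := hmp.integrable_comp_of_integrable (hi n)
      rw [integral_sub (hi _) hi2]
      have : ∫ ω, maxSum T f n (T ω) ∂μ = ∫ ω, maxSum T f n ω ∂μ := by
        have h2 : AEStronglyMeasurable (maxSum T f n) (Measure.map T μ) := by
          rw [hmp.map_eq]; exact (hi n).aestronglyMeasurable
        have := integral_map (μ := μ) (φ := T) hmp.measurable.aemeasurable h2
        rw [hmp.map_eq] at this
        exact this.symm
      rw [this, sub_nonneg]
      exact integral_mono (hi _) (hi _) (maxSum_succ_le T f n)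
    have := ge_of_tendsto' hlim hge
    linarith

lemma ergodic_upper {Ω : Type*} [MeasurableSpace Ω] {μ : Measure Ω} [IsProbabilityMeasure μ]
    {T : Ω → Ω} (hT : Ergodic T μ) {f : Ω → ℝ} (hf : Measurable f) (hfi : Integrable f μ)
    {a : ℝ} (ha : ∫ ω, f ω ∂μ < a) :
    ∀ᵐ ω ∂μ, ∃ C : ℝ, ∀ n : ℕ, birkhoffSum T f n ω ≤ C + n * a := by
  have h := ergodic_bdd hT (f := fun ω => f ω - a) (hf.sub_const a) (hfi.sub (integrable_const a))
    (by rw [integral_sub hfi (integrable_const a)]; simpa using ha)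
  filter_upwards [h] with ω ⟨C, hC⟩
  refine ⟨C, fun n => ?_⟩
  have := hC n
  simp only [birkhoffSum, Finset.sum_sub_distrib, Finset.sum_const, Finset.card_range,
    nsmul_eq_mul] at this ⊢
  linarith

lemma ergodic_ev {Ω : Type*} [MeasurableSpace Ω] {μ : Measure Ω} [IsProbabilityMeasure μ]
    {T : Ω → Ω} (hT : Ergodic T μ) {f : Ω → ℝ} (hf : Measurable f) (hfi : Integrable f μ)
    {a : ℝ} (ha : ∫ ω, f ω ∂μ < a) :
    ∀ᵐ ω ∂μ, ∀ᶠ n : ℕ in atTop, birkhoffSum T f n ω / n < a := by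
  obtain ⟨b, hb, hba⟩ := exists_between ha
  filter_upwards [ergodic_upper hT hf hfi hb] with ω ⟨C, hC⟩
  obtain ⟨N, hN⟩ := exists_nat_gt (C / (a - b))
  filter_upwards [eventually_ge_atTop (max N 1)] with n hn
  have hn1 : (1:ℝ) ≤ n := by exact_mod_cast (le_max_right _ _).trans hn
  have hnN : (N:ℝ) ≤ n := by exact_mod_cast (le_max_left _ _).trans hn
  rw [div_lt_iff₀ (by linarith)]
  rw [div_lt_iff₀ (by linarith)] at hN
  nlinarith [hC n, mul_le_mul_of_nonneg_right hnN (sub_pos.mpr hba).le]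

lemma ergodic_tendsto {Ω : Type*} [MeasurableSpace Ω] {μ : Measure Ω} [IsProbabilityMeasure μ]
    {T : Ω → Ω} (hT : Ergodic T μ) {f : Ω → ℝ} (hf : Measurable f) (hfi : Integrable f μ) :
    ∀ᵐ ω ∂μ, Tendsto (fun n : ℕ => birkhoffSum T f n ω / n) atTop (𝓝 (∫ ω, f ω ∂μ)) := by
  have h1 : ∀ m : ℕ, ∀ᵐ ω ∂μ, ∀ᶠ n : ℕ in atTop,
      birkhoffSum T f n ω / n < (∫ ω, f ω ∂μ) + 1 / (m + 1 : ℝ) := fun m =>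
    ergodic_ev hT hf hfi (by linarith [Nat.one_div_pos_of_nat (α := ℝ) (n := m)])
  have h2 : ∀ m : ℕ, ∀ᵐ ω ∂μ, ∀ᶠ n : ℕ in atTop,
      birkhoffSum T (fun ω => - f ω) n ω / n < -(∫ ω, f ω ∂μ) + 1 / (m + 1 : ℝ) := fun m =>
    ergodic_ev hT hf.neg hfi.neg (by
      rw [integral_neg']; linarith [Nat.one_div_pos_of_nat (α := ℝ) (n := m)])
  rw [← ae_all_iff] at h1 h2
  filter_upwards [h1, h2] with ω h1 h2
  rw [Metric.tendsto_nhds]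
  intro ε hε
  obtain ⟨m, hm⟩ := exists_nat_one_div_lt hε
  filter_upwards [h1 m, h2 m] with n ha hb
  simp only [birkhoffSum, Finset.sum_neg_distrib, neg_div] at ha hb ⊢
  rw [Real.dist_eq, abs_lt]
  constructor <;> linarith

def blk {D : ℕ} (x : ℕ → Fin D) (m j : ℕ) : List (Fin D) := pref (fun i => x (i + j)) m

@[simp] lemma pref_length {D : ℕ} (x : ℕ → Fin D) (n : ℕ) : (pref x n).length = n := by
  simp [pref]

@[simp] lemma blk_length {D : ℕ} (x : ℕ → Fin D) (m j : ℕ) : (blk x m j).length = m := by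
  simp [blk]

lemma pref_succ {D : ℕ} (x : ℕ → Fin D) (n : ℕ) : pref x (n + 1) = pref x n ++ [x n] := by
  simp [pref, List.range_succ]

lemma drop_take_pref {D : ℕ} (x : ℕ → Fin D) {m j n : ℕ} (h : j + m ≤ n) :
    ((pref x n).drop j).take m = blk x m j := by
  apply List.ext_getElem
  · simp; omega
  · intro i h1 h2
    simp [pref, blk, add_comm]

lemma drop_pref {D : ℕ} (x : ℕ → Fin D) (j k : ℕ) :
    (pref x (j + k)).drop j = blk x k j := by
  rw [← drop_take_pref x le_rfl, List.take_of_length_le]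
  simp

def Nw {D : ℕ} (x : ℕ → Fin D) (w : List (Fin D)) (n : ℕ) : ℕ :=
  ((List.range n).filter (fun j => blk x w.length j = w)).length

lemma cnt_pref {D : ℕ} (x : ℕ → Fin D) (w : List (Fin D)) {n : ℕ} (h : w.length ≤ n) :
    cnt w (pref x n) = Nw x w (n - w.length + 1) := by
  unfold cnt Nw
  rw [pref_length]
  congr 1
  apply List.filter_congr
  intro i hi
  rw [List.mem_range] at hi
  rw [drop_take_pref x (by omega)]

lemma Bpred_pos {D : ℕ} (hD : 2 ≤ D) (xs : List (Fin D)) (a : Fin D) (k : ℕ) :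
    0 < Bpred D xs a k := by
  induction k with
  | zero =>
    rw [Bpred]
    have : (0:ℝ) < D := by exact_mod_cast (by omega : 0 < D)
    positivity
  | succ k ih =>
    rw [Bpred]
    split_ifs
    · positivity
    · exact ih

lemma Bpred_lower {D : ℕ} (hD : 2 ≤ D) (x : ℕ → Fin D) (k j : ℕ) (hj : 1 ≤ j) :
    (Nw x (blk x (k + 1) j) j : ℝ) / (Nw x (blk x k j) j + 1) ≤
      Bpred D (pref x (j + k)) (x (j + k)) (k + 1) := by
  have hB := Bpred_pos hD (pref x (j + k)) (x (j + k)) k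
  have e1 : blk x k j ++ [x (j + k)] = blk x (k + 1) j := by
    rw [blk, blk, pref_succ, add_comm k j]
  have e2 : cnt (blk x (k + 1) j) (pref x (j + k)) = Nw x (blk x (k + 1) j) j := by
    rw [cnt_pref _ _ (by simp; omega)]
    congr 1
    simp; omega
  have e3 : cntPred (blk x k j) (pref x (j + k)) = Nw x (blk x k j) j := by
    obtain ⟨i, rfl⟩ : ∃ i, j = i + 1 := ⟨j - 1, by omega⟩
    have hne : pref x (i + 1 + k) ≠ [] := by
      intro h
      have := congrArg List.length h
      simp at this
    rw [cntPred, if_neg hne]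
    have : pref x (i + 1 + k) = pref x (i + k) ++ [x (i + k)] := by
      rw [← pref_succ]; congr 1; omega
    rw [this, List.dropLast_concat, cnt_pref _ _ (by simp)]
    congr 1
    simp
  rw [Bpred, if_pos (by simp), pref_length, Nat.add_sub_cancel, drop_pref, e1, e2, e3]
  gcongr
  linarith

lemma Ppart_nonneg {D : ℕ} (hD : 2 ≤ D) {p : ℕ → ℝ} (hp : ∀ n, p n ∈ Set.Ioo (0 : ℝ) 1)
    (x : ℕ → Fin D) (n : ℕ) : ∀ k : ℤ, 0 ≤ Ppart D p x n k := by
  induction n with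
  | zero => intro k; simp [Ppart]
  | succ n ih =>
    intro k
    have h1 := (hp 0).1
    have h2 := (hp 0).2
    cases n with
    | zero =>
      rw [Ppart]
      split_ifs
      · exact mul_nonneg h1.le (Bpred_pos hD _ _ _).le
      · exact mul_nonneg (by linarith) (Bpred_pos hD _ _ _).le
      · exact le_rfl
    | succ n =>
      have h3 := (hp (n+1)).1
      have h4 := (hp (n+1)).2
      rw [Ppart]
      split_ifs
      · refine mul_nonneg (add_nonneg (mul_nonneg h3.le (ih _))
          (mul_nonneg (by linarith) (ih _))) (Bpred_pos hD _ _ _).le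
      · exact le_rfl

lemma Ppart_diag {D : ℕ} (hD : 2 ≤ D) {p : ℕ → ℝ} (hp : ∀ n, p n ∈ Set.Ioo (0 : ℝ) 1)
    (x : ℕ → Fin D) (k : ℕ) : 0 < Ppart D p x (k + 1) (k : ℤ) := by
  induction k with
  | zero =>
    have h2 := (hp 0).2
    rw [Ppart]
    simpa using mul_pos (sub_pos.mpr h2) (Bpred_pos hD [] (x 0) 1)
  | succ k ih =>
    have h3 := (hp (k+1)).1
    have h4 := (hp (k+1)).2
    rw [Ppart, if_pos (by push_cast; constructor <;> omega)]
    refine mul_pos (add_pos_of_nonneg_of_pos (mul_nonneg h3.le (Ppart_nonneg hD hp _ _ _)) ?_)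
      (Bpred_pos hD _ _ _)
    push_cast
    simpa using mul_pos (sub_pos.mpr h4) ih

lemma Ppart_step {D : ℕ} (hD : 2 ≤ D) {p : ℕ → ℝ} (hp : ∀ n, p n ∈ Set.Ioo (0 : ℝ) 1)
    (x : ℕ → Fin D) (k j : ℕ) (hj : 1 ≤ j) :
    Ppart D p x (j + k) (k : ℤ) * p (j + k) * Bpred D (pref x (j + k)) (x (j + k)) (k + 1) ≤
      Ppart D p x (j + 1 + k) (k : ℤ) := by
  obtain ⟨n, hn⟩ : ∃ n, j + k = n + 1 := ⟨j + k - 1, by omega⟩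
  have hn' : j + 1 + k = n + 2 := by omega
  have h4 := (hp (n+1)).2
  rw [hn', hn, Ppart, if_pos (by constructor <;> omega)]
  have : ((k : ℤ) + 1).toNat = k + 1 := by omega
  rw [this]
  refine mul_le_mul_of_nonneg_right ?_ (Bpred_pos hD _ _ _).le
  have := mul_nonneg (sub_pos.mpr h4).le (Ppart_nonneg hD hp x (n+1) ((k:ℤ) - 1))
  linarith

lemma Ppart_pos {D : ℕ} (hD : 2 ≤ D) {p : ℕ → ℝ} (hp : ∀ n, p n ∈ Set.Ioo (0 : ℝ) 1)
    (x : ℕ → Fin D) (k j : ℕ) (hj : 1 ≤ j) : 0 < Ppart D p x (j + k) (k : ℤ) := by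
  induction j, hj using Nat.le_induction with
  | base => rw [add_comm]; exact Ppart_diag hD hp x k
  | succ j hj ih =>
    exact lt_of_lt_of_le (mul_pos (mul_pos ih (hp _).1) (Bpred_pos hD _ _ _))
      (Ppart_step hD hp x k j hj)

lemma Ppart_le_swP {D : ℕ} (hD : 2 ≤ D) {p : ℕ → ℝ} (hp : ∀ n, p n ∈ Set.Ioo (0 : ℝ) 1)
    (x : ℕ → Fin D) (k n : ℕ) (h : k + 1 ≤ n) : Ppart D p x n (k : ℤ) ≤ swP D p x n := by
  have := Finset.single_le_sum (f := fun kk : ℕ => Ppart D p x n ((kk : ℤ) - 1))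
    (s := Finset.range (n + 1)) (fun i _ => Ppart_nonneg hD hp x n _)
    (Finset.mem_range.mpr (by omega : k + 1 < n + 1))
  simpa [swP] using this

/-- Deterministic part. -/
lemma det_bound {D : ℕ} (hD : 2 ≤ D) {p : ℕ → ℝ} (hp : ∀ n, p n ∈ Set.Ioo (0 : ℝ) 1)
    {L : ℝ} (hL : 0 < L)
    (hprod : Tendsto (fun N : ℕ => ∏ i ∈ Finset.range N, p i) atTop (𝓝 L))
    (x : ℕ → Fin D) (k : ℕ) (q : List (Fin D) → ℝ)
    (hfreq : ∀ w, Tendsto (fun n : ℕ => (Nw x w n : ℝ) / n) atTop (𝓝 (q w)))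
    (hpos : ∀ m j, 0 < q (blk x m j)) {δ : ℝ} (hδ : 0 < δ) :
    ∃ C : ℝ, ∀ᶠ j : ℕ in atTop, -Real.log (swP D p x (j + k)) ≤
      C + ∑ i ∈ Finset.range j,
        (-Real.log (q (blk x (k + 1) i)) - -Real.log (q (blk x k i)) + δ) := by
  set g : ℕ → ℝ := fun i => -Real.log (q (blk x (k + 1) i)) - -Real.log (q (blk x k i)) + δ with hg
  -- eventually for all words
  have hw : ∀ u v : List (Fin D), 0 < q u → 0 < q v → ∀ᶠ j : ℕ in atTop,
      Real.exp (-(-Real.log (q u) - -Real.log (q v) + δ)) ≤ (Nw x u j : ℝ) / (Nw x v j + 1) := by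
    intro u v hu hv
    have h1 : Tendsto (fun j : ℕ => ((Nw x u j : ℝ) / j) / ((Nw x v j : ℝ) / j + 1 / j)) atTop
        (𝓝 (q u / (q v + 0))) :=
      (hfreq u).div ((hfreq v).add tendsto_one_div_atTop_nhds_zero_nat) (by simpa using hv.ne')
    rw [add_zero] at h1
    have h2 : Real.exp (-(-Real.log (q u) - -Real.log (q v) + δ)) < q u / q v := by
      have : q u / q v = Real.exp (Real.log (q u) - Real.log (q v)) := by
        rw [Real.exp_sub, Real.exp_log hu, Real.exp_log hv]
      rw [this, Real.exp_lt_exp]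
      linarith
    filter_upwards [h1.eventually_const_lt h2, eventually_ge_atTop 1] with j hj hj1
    have hj0 : (j : ℝ) ≠ 0 := by positivity
    have : ((Nw x u j : ℝ) / j) / ((Nw x v j : ℝ) / j + 1 / j)
        = (Nw x u j : ℝ) / (Nw x v j + 1) := by
      field_simp
    rw [this] at hj
    exact hj.le
  have hfin1 : {l : List (Fin D) | l.length = k + 1}.Finite := List.finite_length_eq _ _
  have hfin2 : {l : List (Fin D) | l.length = k}.Finite := List.finite_length_eq _ _
  have hall : ∀ᶠ j : ℕ in atTop, ∀ u ∈ {l : List (Fin D) | l.length = k + 1},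
      ∀ v ∈ {l : List (Fin D) | l.length = k}, 0 < q u → 0 < q v →
      Real.exp (-(-Real.log (q u) - -Real.log (q v) + δ)) ≤ (Nw x u j : ℝ) / (Nw x v j + 1) := by
    rw [eventually_all_finite hfin1]
    intro u _
    rw [eventually_all_finite hfin2]
    intro v _
    by_cases h1 : 0 < q u
    · by_cases h2 : 0 < q v
      · filter_upwards [hw u v h1 h2] with j hj _ _ using hj
      · exact Eventually.of_forall fun j _ h => absurd h h2
    · exact Eventually.of_forall fun j h => absurd h h1
  obtain ⟨J, hJ⟩ := eventually_atTop.mp hall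
  have hstep : ∀ j, J + 1 ≤ j → Ppart D p x (j + k) (k : ℤ) * p (j + k) * Real.exp (- g j) ≤
      Ppart D p x (j + 1 + k) (k : ℤ) := by
    intro j hj
    refine le_trans ?_ (Ppart_step hD hp x k j (by omega))
    refine mul_le_mul_of_nonneg_left ?_
      (mul_pos (Ppart_pos hD hp x k j (by omega)) (hp _).1).le
    refine le_trans ?_ (Bpred_lower hD x k j (by omega))
    exact hJ j (by omega) _ (by simp) _ (by simp) (hpos _ _) (hpos _ _)
  have hPpos : ∀ n, 0 < ∏ i ∈ Finset.range n, p i := fun n =>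
    Finset.prod_pos fun i _ => (hp i).1
  have hPL : ∀ n, L ≤ ∏ i ∈ Finset.range n, p i := by
    intro n
    refine Antitone.le_of_tendsto (antitone_nat_of_succ_le fun m => ?_) hprod n
    rw [Finset.prod_range_succ]
    exact mul_le_of_le_one_right (hPpos m).le (hp m).2.le
  obtain ⟨c, hc, hbase⟩ : ∃ c : ℝ, 0 < c ∧ c * (∏ i ∈ Finset.range (J + 1 + k), p i) *
      Real.exp (-∑ i ∈ Finset.range (J + 1), g i) = Ppart D p x (J + 1 + k) (k : ℤ) := by
    have h1 := hPpos (J + 1 + k)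
    have h2 := Real.exp_pos (-∑ i ∈ Finset.range (J + 1), g i)
    have h3 := Ppart_pos hD hp x k (J + 1) (by omega)
    refine ⟨Ppart D p x (J + 1 + k) (k : ℤ) / ((∏ i ∈ Finset.range (J + 1 + k), p i) *
      Real.exp (-∑ i ∈ Finset.range (J + 1), g i)), by positivity, ?_⟩
    rw [mul_assoc, div_mul_cancel₀]
    positivity
  have hind : ∀ j, J + 1 ≤ j → c * (∏ i ∈ Finset.range (j + k), p i) *
      Real.exp (-∑ i ∈ Finset.range j, g i) ≤ Ppart D p x (j + k) (k : ℤ) := by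
    intro j hj
    induction j, hj using Nat.le_induction with
    | base => exact hbase.le
    | succ j hj ih =>
      refine le_trans ?_ (hstep j hj)
      have e : j + 1 + k = (j + k) + 1 := by omega
      rw [e, Finset.prod_range_succ, Finset.sum_range_succ, neg_add, Real.exp_add]
      have := mul_le_mul_of_nonneg_right ih
        (mul_pos (hp (j + k)).1 (Real.exp_pos (-g j))).le
      calc _ = c * (∏ i ∈ Finset.range (j + k), p i) *
            Real.exp (-∑ i ∈ Finset.range j, g i) * (p (j + k) * Real.exp (-g j)) := by ring
        _ ≤ _ := this
        _ = _ := by ring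
  refine ⟨-Real.log (c * L), ?_⟩
  filter_upwards [eventually_ge_atTop (J + 1)] with j hj
  have h1 : c * L * Real.exp (-∑ i ∈ Finset.range j, g i) ≤ swP D p x (j + k) := by
    refine le_trans ?_ ((hind j hj).trans (Ppart_le_swP hD hp x k (j + k) (by omega)))
    refine mul_le_mul_of_nonneg_right ?_ (Real.exp_pos _).le
    exact mul_le_mul_of_nonneg_left (hPL _) hc.le
  have h2 := Real.log_le_log (by positivity) h1
  rw [Real.log_mul (by positivity) (Real.exp_pos _).ne', Real.log_exp] at h2
  linarith

def resF (D n : ℕ) (ω : Omega D) : Fin n → Fin D := fun i => ω (((i : ℕ) : ℤ) + 1)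

lemma resF_meas (D n : ℕ) : Measurable (resF D n) :=
  measurable_pi_lambda _ fun _ => measurable_pi_apply _

lemma pref_path (D n : ℕ) (ω : Omega D) : pref (path D ω) n = List.ofFn (resF D n ω) := by
  apply List.ext_getElem
  · simp
  · intro i h1 h2
    simp [pref, path, resF]

lemma fac_meas {D n : ℕ} (F : (Fin n → Fin D) → ℝ) : Measurable (fun ω => F (resF D n ω)) :=
  (Measurable.of_discrete (f := F)).comp (resF_meas D n)

lemma fac_int {D n : ℕ} (Q : Measure (Omega D)) [IsProbabilityMeasure Q]
    (F : (Fin n → Fin D) → ℝ) : Integrable (fun ω => F (resF D n ω)) Q := by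
  obtain ⟨C, hC⟩ := (Set.finite_range (fun v => ‖F v‖)).bddAbove
  exact Integrable.of_bound (fac_meas F).aestronglyMeasurable C
    (Eventually.of_forall fun ω => hC ⟨_, rfl⟩)

def wordSet {D : ℕ} (w : List (Fin D)) : Set (Omega D) := {ω | pref (path D ω) w.length = w}

noncomputable def qw {D : ℕ} (Q : Measure (Omega D)) (w : List (Fin D)) : ℝ :=
  (Q (wordSet w)).toReal

lemma Qstr_eq {D : ℕ} (Q : Measure (Omega D)) (x : ℕ → Fin D) (n : ℕ) :
    Qstr D Q x n = qw Q (pref x n) := by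
  unfold Qstr qw wordSet
  congr 2
  ext ω
  simp [cylSet, pref, path]

lemma wordSet_meas {D : ℕ} (w : List (Fin D)) : MeasurableSet (wordSet w) := by
  have : wordSet w = resF D w.length ⁻¹' {v | List.ofFn v = w} := by
    ext ω; simp [wordSet, pref_path]
  rw [this]
  exact resF_meas D _ (MeasurableSet.of_discrete)

lemma path_iter {D : ℕ} (ω : Omega D) (j : ℕ) :
    path D ((shiftT D)^[j] ω) = fun i => path D ω (i + j) := by
  induction j generalizing ω with
  | zero => rfl
  | succ j ih =>
    rw [Function.iterate_succ_apply, ih]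
    funext i
    simp only [path, shiftT]
    first | (congr 1; push_cast; ring) | (congr 1)

lemma blk_path {D : ℕ} (ω : Omega D) (m j : ℕ) :
    blk (path D ω) m j = pref (path D ((shiftT D)^[j] ω)) m := by
  rw [path_iter]; rfl

lemma Nw_eq {D : ℕ} (ω : Omega D) (w : List (Fin D)) (n : ℕ) :
    (Nw (path D ω) w n : ℝ) = birkhoffSum (shiftT D) ((wordSet w).indicator 1) n ω := by
  induction n with
  | zero => simp [Nw]
  | succ n ih =>
    rw [birkhoffSum_succ, ← ih]
    simp only [Nw, List.range_succ, List.filter_append, List.length_append, Nat.cast_add]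
    congr 1
    by_cases h : blk (path D ω) w.length n = w
    · have h' : (shiftT D)^[n] ω ∈ wordSet w := by rw [wordSet, Set.mem_ofPred_eq, ← blk_path, h]
      simp [h, h']
    · have h' : (shiftT D)^[n] ω ∉ wordSet w := by rwa [wordSet, Set.mem_ofPred_eq, ← blk_path]
      simp [h, h']

lemma ae_freq {D : ℕ} (Q : Measure (Omega D)) [IsProbabilityMeasure Q]
    (hQ : Ergodic (shiftT D) Q) : ∀ᵐ ω ∂Q, ∀ w : List (Fin D),
      Tendsto (fun n : ℕ => (Nw (path D ω) w n : ℝ) / n) atTop (𝓝 (qw Q w)) := by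
  rw [ae_all_iff]
  intro w
  have h := ergodic_tendsto hQ (f := (wordSet w).indicator 1)
    (measurable_one.indicator (wordSet_meas w))
    ((integrable_const (1:ℝ)).indicator (wordSet_meas w))
  filter_upwards [h] with ω hω
  simp_rw [Nw_eq]
  rw [integral_indicator_one (wordSet_meas w)] at hω
  exact hω

lemma ae_pos {D : ℕ} (Q : Measure (Omega D)) [IsProbabilityMeasure Q]
    (hQ : Ergodic (shiftT D) Q) : ∀ᵐ ω ∂Q, ∀ m j, 0 < qw Q (blk (path D ω) m j) := by
  have h : ∀ᵐ ω ∂Q, ∀ (w : List (Fin D)) (j : ℕ), (shiftT D)^[j] ω ∈ wordSet w → 0 < qw Q w := by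
    rw [ae_all_iff]
    intro w
    rw [ae_all_iff]
    intro j
    by_cases h0 : Q (wordSet w) = 0
    · have h1 := (hQ.toMeasurePreserving.iterate j).measure_preimage
        (wordSet_meas w).nullMeasurableSet
      rw [h0] at h1
      filter_upwards [measure_eq_zero_iff_ae_notMem.mp h1] with ω hω h2
      exact absurd h2 hω
    · exact Eventually.of_forall fun ω _ => ENNReal.toReal_pos h0 (measure_ne_top _ _)
  filter_upwards [h] with ω hω m j
  apply hω _ j
  rw [wordSet, Set.mem_ofPred_eq, blk_length, blk_path]

noncomputable def lg (D : ℕ) (Q : Measure (Omega D)) (n : ℕ) (ω : Omega D) : ℝ :=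
  -Real.log (Qstr D Q (path D ω) n)

lemma lg_eq {D : ℕ} (Q : Measure (Omega D)) (n : ℕ) : lg D Q n =
    fun ω => (fun v => -Real.log (qw Q (List.ofFn v))) (resF D n ω) := by
  funext ω
  simp only [lg, Qstr_eq, pref_path]

lemma lg_meas {D : ℕ} (Q : Measure (Omega D)) (n : ℕ) : Measurable (lg D Q n) := by
  rw [lg_eq]; exact fac_meas (fun v => -Real.log (qw Q (List.ofFn v)))

lemma lg_int {D : ℕ} (Q : Measure (Omega D)) [IsProbabilityMeasure Q] (n : ℕ) :
    Integrable (lg D Q n) Q := by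
  rw [lg_eq]; exact fac_int Q (fun v => -Real.log (qw Q (List.ofFn v)))

lemma lg_nonneg {D : ℕ} (Q : Measure (Omega D)) [IsProbabilityMeasure Q] (n : ℕ) (ω : Omega D) :
    0 ≤ lg D Q n ω := by
  rw [lg, neg_nonneg]
  exact Real.log_nonpos ENNReal.toReal_nonneg measureReal_le_one

lemma main_eps {D : ℕ} (hD : 2 ≤ D) {p : ℕ → ℝ} (hp : ∀ n, p n ∈ Set.Ioo (0 : ℝ) 1)
    {L : ℝ} (hL : 0 < L)
    (hprod : Tendsto (fun N : ℕ => ∏ i ∈ Finset.range N, p i) atTop (𝓝 L))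
    (Q : Measure (Omega D)) [IsProbabilityMeasure Q]
    (hQerg : Ergodic (shiftT D) Q) (h : ℝ) (h0 : 0 ≤ h)
    (hent : Tendsto (fun n : ℕ => (∫ ω, lg D Q n ω ∂Q) / n) atTop (𝓝 h))
    (ε : ℝ) (hε : 0 < ε) :
    ∀ᵐ ω ∂Q, ∀ᶠ n : ℕ in atTop, -Real.log (swP D p (path D ω) n) / n ≤ h + 4 * ε := by
  obtain ⟨k, hk⟩ : ∃ k, (∫ ω, lg D Q (k + 1) ω ∂Q) - ∫ ω, lg D Q k ω ∂Q < h + ε := by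
    by_contra! hc
    have h1 : ∀ n : ℕ, n * (h + ε) ≤ ∫ ω, lg D Q n ω ∂Q := by
      intro n
      induction n with
      | zero => simpa using integral_nonneg (lg_nonneg Q 0)
      | succ n ih => push_cast; linarith [hc n]
    have h2 : ∀ᶠ n : ℕ in atTop, h + ε ≤ (∫ ω, lg D Q n ω ∂Q) / n := by
      filter_upwards [eventually_ge_atTop 1] with n hn
      have : (0:ℝ) < n := by exact_mod_cast hn
      rw [le_div_iff₀ this]
      linarith [h1 n]
    linarith [ge_of_tendsto hent h2]
  have hup := ergodic_upper hQerg (f := fun ω => lg D Q (k + 1) ω - lg D Q k ω)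
    ((lg_meas Q _).sub (lg_meas Q _)) ((lg_int Q _).sub (lg_int Q _)) (a := h + ε)
    (by rw [integral_sub (lg_int Q _) (lg_int Q _)]; exact hk)
  filter_upwards [hup, ae_freq Q hQerg, ae_pos Q hQerg] with ω ⟨C, hC⟩ hfreq hpos
  obtain ⟨C', hC'⟩ := det_bound hD hp hL hprod (path D ω) k (qw Q) hfreq hpos hε
  have hev : ∀ᶠ j : ℕ in atTop, -Real.log (swP D p (path D ω) (j + k)) / ((j + k : ℕ) : ℝ)
      ≤ h + 4 * ε := by
    obtain ⟨M, hM⟩ := exists_nat_gt ((C + C') / ε)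
    filter_upwards [hC', eventually_ge_atTop (max M 1)] with j hj hjM
    have hj1 : (1:ℝ) ≤ j := by exact_mod_cast (le_max_right _ _).trans hjM
    have hjM : (M:ℝ) ≤ j := by exact_mod_cast (le_max_left _ _).trans hjM
    have hs := hC j
    have e : ∑ i ∈ Finset.range j, (-Real.log (qw Q (blk (path D ω) (k + 1) i)) -
        -Real.log (qw Q (blk (path D ω) k i)) + ε) =
        birkhoffSum (shiftT D) (fun ω => lg D Q (k + 1) ω - lg D Q k ω) j ω + j * ε := by
      simp only [birkhoffSum, Finset.sum_add_distrib, Finset.sum_const, Finset.card_range,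
        nsmul_eq_mul, lg, Qstr_eq, blk_path]
    rw [e] at hj
    rw [div_lt_iff₀ hε] at hM
    have hk0 : (0:ℝ) ≤ k := Nat.cast_nonneg k
    push_cast
    rw [div_le_iff₀ (by linarith)]
    have := mul_le_mul_of_nonneg_right hjM hε.le
    nlinarith [mul_nonneg hk0 h0, mul_nonneg hk0 hε.le]
  obtain ⟨J, hJ⟩ := eventually_atTop.mp hev
  filter_upwards [eventually_ge_atTop (J + k)] with n hn
  have := hJ (n - k) (by omega)
  rwa [Nat.sub_add_cancel (by omega)] at this

/-- The plain switch distribution is strongly universal: for every stationary ergodic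
probability measure `Q` on `Ω = {1,...,D}^ℤ`, `Q`-almost surely
`limsup_{n→∞} (1/n)·(−log P(X_1^n)) ≤ h_Q`, where `h_Q` is the entropy rate of `Q`. -/
theorem plain_switch_strongly_universal
    (D : ℕ) (hD : 2 ≤ D) (p : ℕ → ℝ) (hp : ∀ n, p n ∈ Set.Ioo (0 : ℝ) 1)
    (hprod : ∃ L, 0 < L ∧ Tendsto (fun N : ℕ => ∏ i ∈ Finset.range N, p i) atTop (𝓝 L))
    (Q : Measure (Omega D)) [IsProbabilityMeasure Q]
    (hQerg : Ergodic (shiftT D) Q)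
    (hQ : ℝ)
    (hent : Tendsto
      (fun n : ℕ => (∫ ω, -Real.log (Qstr D Q (path D ω) n) ∂Q) / n) atTop (𝓝 hQ)) :
    ∀ᵐ ω ∂Q,
      Filter.limsup (fun n : ℕ => -Real.log (swP D p (path D ω) n) / n) atTop ≤ hQ := by
  obtain ⟨L, hL, hprod⟩ := hprod
  have h0 : 0 ≤ hQ := by
    refine ge_of_tendsto' hent fun n => ?_
    exact div_nonneg (integral_nonneg (lg_nonneg Q n)) (Nat.cast_nonneg n)
  have h1 : ∀ m : ℕ, ∀ᵐ ω ∂Q, ∀ᶠ n : ℕ in atTop,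
      -Real.log (swP D p (path D ω) n) / n ≤ hQ + 4 * (1 / ((m : ℝ) + 1)) := fun m =>
    main_eps hD hp hL hprod Q hQerg hQ h0 hent _ Nat.one_div_pos_of_nat
  rw [← ae_all_iff] at h1
  filter_upwards [h1] with ω hω
  refine le_of_forall_pos_le_add fun ε hε => ?_
  obtain ⟨m, hm⟩ := exists_nat_one_div_lt (show 0 < ε / 4 by positivity)
  rw [Filter.limsup_eq]
  set S := {a : ℝ | ∀ᶠ n : ℕ in atTop, -Real.log (swP D p (path D ω) n) / n ≤ a} with hS
  by_cases hb : BddBelow S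
  · have := csInf_le hb (hω m)
    linarith
  · rw [Real.sInf_of_not_bddBelow hb]
    linarith
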